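/- (Strong converse.) For any ε ∈ (0,1), any α > 0 and any pair of distributions (P1,P2) on a finite alphabet X with V(P1,P2,α) > 0, the limit lim_{n→∞} λ*(n,α,ε|P1,P2) exists and equals GJS(P1,P2,α). -/

import Mathlib

open Filter Topology MeasureTheory

namespace Classification

variable {X : Type*} [Fintype X] [DecidableEq X]

/-- `P` is a probability mass function on the finite alphabet `X`. -/
def IsDist (P : X → ℝ) : Prop := (∀ x, 0 ≤ P x) ∧ ∑ x, P x = 1

/-- `P` has full support. -/
def FullSupport (P : X → ℝ) : Prop := ∀ x, 0 < P x

/-- Empirical distribution (type) of a sequence `x : Fin m → X`. -/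
noncomputable def empDist {m : ℕ} (x : Fin m → X) : X → ℝ :=
  fun a => ((Finset.univ.filter fun i => x i = a).card : ℝ) / m

/-- Real-valued KL divergence with the usual `0 · log 0 = 0` convention. -/
noncomputable def klDivR (Q P : X → ℝ) : ℝ := ∑ x, Q x * Real.log (Q x / P x)

open Classical in
/-- Extended-real-valued KL divergence: `⊤` when `Q` is not absolutely continuous w.r.t. `P`. -/
noncomputable def klDivE (Q P : X → ℝ) : EReal :=
  if ∀ x, P x = 0 → Q x = 0 then ((klDivR Q P : ℝ) : EReal) else ⊤

/-- The mixture `(α P1 + P2) / (1 + α)`. -/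
noncomputable def mix (P1 P2 : X → ℝ) (α : ℝ) : X → ℝ :=
  fun x => (α * P1 x + P2 x) / (1 + α)

/-- Generalized Jensen–Shannon divergence
`GJS(P1,P2,α) = α D(P1 ‖ (αP1+P2)/(1+α)) + D(P2 ‖ (αP1+P2)/(1+α))`. -/
noncomputable def GJS (P1 P2 : X → ℝ) (α : ℝ) : ℝ :=
  α * klDivR P1 (mix P1 P2 α) + klDivR P2 (mix P1 P2 α)

/-- Training sequence length `N = ⌈α n⌉`. -/
noncomputable def trainLen (α : ℝ) (n : ℕ) : ℕ := ⌈α * (n : ℝ)⌉₊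

/-- Probability of observing the sequence `x` under i.i.d. sampling from `P`. -/
noncomputable def seqProb (P : X → ℝ) {m : ℕ} (x : Fin m → X) : ℝ := ∏ i, P (x i)

/-- A binary classification test: output `true` means "declare H₂",
`false` means "declare H₁". -/
abbrev BTest (X : Type*) (α : ℝ) (n : ℕ) : Type _ :=
  (Fin (trainLen α n) → X) → (Fin (trainLen α n) → X) → (Fin n → X) → Bool

/-- Type-I error probability: probability of declaring `H₂` when `Y^n ~ P1` (hypothesis H₁). -/
noncomputable def beta1 {α : ℝ} {n : ℕ} (φ : BTest X α n) (P1 P2 : X → ℝ) : ℝ :=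
  ∑ x1 : Fin (trainLen α n) → X, ∑ x2 : Fin (trainLen α n) → X, ∑ y : Fin n → X,
    if φ x1 x2 y = true then seqProb P1 x1 * seqProb P2 x2 * seqProb P1 y else 0

/-- Type-II error probability: probability of declaring `H₁` when `Y^n ~ P2` (hypothesis H₂). -/
noncomputable def beta2 {α : ℝ} {n : ℕ} (φ : BTest X α n) (P1 P2 : X → ℝ) : ℝ :=
  ∑ x1 : Fin (trainLen α n) → X, ∑ x2 : Fin (trainLen α n) → X, ∑ y : Fin n → X,
    if φ x1 x2 y = false then seqProb P1 x1 * seqProb P2 x2 * seqProb P2 y else 0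

open Classical in
/-- Gutman's test with threshold `lam`: declare `H₁` iff `GJS(T̂_{x₁}, T̂_y, α) ≤ lam`. -/
noncomputable def gutman (α lam : ℝ) (n : ℕ) : BTest X α n :=
  fun x1 _ y => if GJS (empDist x1) (empDist y) α ≤ lam then false else true

open Classical in
/-- `- log x` as an extended real, with `⊤` at `x = 0`. -/
noncomputable def negLogE (x : ℝ) : EReal :=
  if x = 0 then ⊤ else ((-Real.log x : ℝ) : EReal)

/-- Gutman's exponent function
`F(P1,P2,α,lam) = min { α D(Q1‖P1) + D(Q2‖P2) : GJS(Q1,Q2,α) ≤ lam }` (as an inf in `EReal`). -/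
noncomputable def Fexp (P1 P2 : X → ℝ) (α lam : ℝ) : EReal :=
  sInf {v : EReal | ∃ Q1 Q2 : X → ℝ, IsDist Q1 ∧ IsDist Q2 ∧ GJS Q1 Q2 α ≤ lam ∧
    v = (α : EReal) * klDivE Q1 P1 + klDivE Q2 P2}

/-- Expectation of `f` under `P`. -/
noncomputable def expect (P : X → ℝ) (f : X → ℝ) : ℝ := ∑ x, P x * f x

/-- Variance of `f` under `P`. -/
noncomputable def varD (P : X → ℝ) (f : X → ℝ) : ℝ :=
  expect P (fun x => (f x - expect P f) ^ 2)

/-- Information density `ı₁(x) = log((1+α) P1(x) / (α P1(x) + P2(x)))`. -/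
noncomputable def iDens1 (P1 P2 : X → ℝ) (α : ℝ) (x : X) : ℝ :=
  Real.log ((1 + α) * P1 x / (α * P1 x + P2 x))

/-- Information density `ı₂(x) = log((1+α) P2(x) / (α P1(x) + P2(x)))`. -/
noncomputable def iDens2 (P1 P2 : X → ℝ) (α : ℝ) (x : X) : ℝ :=
  Real.log ((1 + α) * P2 x / (α * P1 x + P2 x))

/-- The dispersion `V(P1,P2,α) = α Var_{P1}[ı₁] + Var_{P2}[ı₂]`. -/
noncomputable def disp (P1 P2 : X → ℝ) (α : ℝ) : ℝ :=
  α * varD P1 (iDens1 P1 P2 α) + varD P2 (iDens2 P1 P2 α)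

/-- The standard Gaussian cumulative distribution function `Φ`. -/
noncomputable def stdCDF (x : ℝ) : ℝ :=
  (Real.sqrt (2 * Real.pi))⁻¹ * ∫ t in Set.Iic x, Real.exp (-t ^ 2 / 2)

/-- The inverse standard Gaussian cdf `Φ⁻¹`. -/
noncomputable def stdCDFInv (p : ℝ) : ℝ := sInf {x : ℝ | p ≤ stdCDF x}

/-- The non-asymptotic fundamental limit `λ*(n, α, ε | P1, P2)` for binary classification. -/
noncomputable def lamStar (α : ℝ) (n : ℕ) (ε : ℝ) (P1 P2 : X → ℝ) : ℝ :=
  sSup {lam : ℝ | 0 ≤ lam ∧ ∃ φ : BTest X α n,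
    (∀ Q1 Q2 : X → ℝ, IsDist Q1 → IsDist Q2 →
      beta1 φ Q1 Q2 ≤ Real.exp (-((n : ℝ) * lam))) ∧
    beta2 φ P1 P2 ≤ ε}

/-- Rényi divergence of order `γ`. -/
noncomputable def renyi (γ : ℝ) (P1 P2 : X → ℝ) : ℝ :=
  (1 / (γ - 1)) * Real.log (∑ x, P1 x ^ γ * P2 x ^ (1 - γ))

/-- The fundamental limit `τ*(n, α, ε | φ_n^Gut, P1, P2)` in the dual setting for Gutman's test. -/
noncomputable def tauStarGut (α : ℝ) (n : ℕ) (ε : ℝ) (P1 P2 : X → ℝ) : ℝ :=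
  sSup {τ : ℝ | 0 ≤ τ ∧ ∃ lam : ℝ, 0 ≤ lam ∧
    (∀ Q1 Q2 : X → ℝ, IsDist Q1 → IsDist Q2 →
      beta1 (gutman α lam n) Q1 Q2 ≤ ε) ∧
    beta2 (gutman α lam n) P1 P2 ≤ Real.exp (-((n : ℝ) * τ))}

/-- A two-sample homogeneity test: `true` means "declare H₂" (different distributions). -/
abbrev TTest (X : Type*) (α : ℝ) (n : ℕ) : Type _ :=
  (Fin (trainLen α n) → X) → (Fin n → X) → Bool

/-- False-alarm probability of a two-sample test. -/
noncomputable def betaFA {α : ℝ} {n : ℕ} (φ : TTest X α n) (P1 : X → ℝ) : ℝ :=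
  ∑ x : Fin (trainLen α n) → X, ∑ y : Fin n → X,
    if φ x y = true then seqProb P1 x * seqProb P1 y else 0

/-- Miss-detection probability of a two-sample test. -/
noncomputable def betaMD {α : ℝ} {n : ℕ} (φ : TTest X α n) (P1 P2 : X → ℝ) : ℝ :=
  ∑ x : Fin (trainLen α n) → X, ∑ y : Fin n → X,
    if φ x y = false then seqProb P1 x * seqProb P2 y else 0

/-- The fundamental limit `ξ*(n, α, ε | P1, P2)` for two-sample homogeneity testing. -/
noncomputable def xiStar (α : ℝ) (n : ℕ) (ε : ℝ) (P1 P2 : X → ℝ) : ℝ :=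
  sSup {lam : ℝ | 0 ≤ lam ∧ ∃ φ : TTest X α n,
    (∀ Q1 : X → ℝ, IsDist Q1 → betaFA φ Q1 ≤ Real.exp (-((n : ℝ) * lam))) ∧
    betaMD φ P1 P2 ≤ ε}

/-- An M-ary classification test with the rejection option: `some j` means "declare H_j",
`none` means "reject". -/
abbrev MTest (X : Type*) (M : ℕ) (α : ℝ) (n : ℕ) : Type _ :=
  (Fin M → Fin (trainLen α n) → X) → (Fin n → X) → Option (Fin M)

/-- Type-`j` error probability: probability of declaring some hypothesis other than
`H_j` or rejection, under `H_j`. -/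
noncomputable def betaM {M : ℕ} {α : ℝ} {n : ℕ} (ψ : MTest X M α n)
    (P : Fin M → X → ℝ) (j : Fin M) : ℝ :=
  ∑ xs : Fin M → Fin (trainLen α n) → X, ∑ y : Fin n → X,
    if ψ xs y ≠ some j ∧ ψ xs y ≠ none then
      (∏ i, seqProb (P i) (xs i)) * seqProb (P j) y else 0

/-- Type-`j` rejection probability: probability of rejecting under `H_j`. -/
noncomputable def zetaM {M : ℕ} {α : ℝ} {n : ℕ} (ψ : MTest X M α n)
    (P : Fin M → X → ℝ) (j : Fin M) : ℝ :=
  ∑ xs : Fin M → Fin (trainLen α n) → X, ∑ y : Fin n → X,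
    if ψ xs y = none then (∏ i, seqProb (P i) (xs i)) * seqProb (P j) y else 0

/-- The fundamental limit `λ*(n, α, ε | P)` for M-ary classification with rejection. -/
noncomputable def lamStarM (M : ℕ) (α : ℝ) (n : ℕ) (ε : Fin M → ℝ)
    (P : Fin M → X → ℝ) : ℝ :=
  sSup {lam : ℝ | 0 ≤ lam ∧ ∃ ψ : MTest X M α n,
    (∀ Q : Fin M → X → ℝ, (∀ i, IsDist (Q i)) → ∀ j,
      betaM ψ Q j ≤ Real.exp (-((n : ℝ) * lam))) ∧
    (∀ j, zetaM ψ P j ≤ ε j)}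

open Classical in
/-- Gutman's M-ary test with rejection and threshold `lam`. -/
noncomputable def gutmanM (M : ℕ) [NeZero M] (α lam : ℝ) (n : ℕ) : MTest X M α n :=
  fun xs y =>
    if ∃ i k : Fin M, i ≠ k ∧ GJS (empDist (xs i)) (empDist y) α ≤ lam ∧
        GJS (empDist (xs k)) (empDist y) α ≤ lam then none
    else if h : ∃ j : Fin M, GJS (empDist (xs j)) (empDist y) α ≤ lam then some h.choose
    else some 0

/-- The fundamental limit `τ*(n, α, ε | Ψ_n^Gut, P)` in the dual setting for
Gutman's M-ary test. -/
noncomputable def tauStarGutM (M : ℕ) [NeZero M] (α : ℝ) (n : ℕ) (ε : ℝ)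
    (P : Fin M → X → ℝ) : ℝ :=
  sSup {τ : ℝ | 0 ≤ τ ∧ ∃ lam : ℝ, 0 ≤ lam ∧
    (∀ Q : Fin M → X → ℝ, (∀ i, IsDist (Q i)) → ∀ j,
      betaM (gutmanM M α lam n) Q j ≤ ε) ∧
    (∀ j, zetaM (gutmanM M α lam n) P j ≤ Real.exp (-((n : ℝ) * τ)))}

/-- Generalized divergence of three distributions
`D_γ(P1,P2,P3) = (γ-1)⁻¹ log Σ_x P1(x)^{1-γ} P2(x)^{γ/2} P3(x)^{γ/2}`. -/
noncomputable def genDiv (γ : ℝ) (P1 P2 P3 : X → ℝ) : ℝ :=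
  (1 / (γ - 1)) * Real.log (∑ x, P1 x ^ (1 - γ) * P2 x ^ (γ / 2) * P3 x ^ (γ / 2))

/-- A binary classification test with the rejection option: `some 0` means "declare H₁",
`some 1` means "declare H₂", `none` means "reject". -/
abbrev RTest (X : Type*) (α : ℝ) (n : ℕ) : Type _ :=
  (Fin (trainLen α n) → X) → (Fin (trainLen α n) → X) → (Fin n → X) → Option (Fin 2)

/-- Type-1 error probability of a rejection test: declare `H₂` under `H₁`. -/
noncomputable def beta1R {α : ℝ} {n : ℕ} (ψ : RTest X α n) (P1 P2 : X → ℝ) : ℝ :=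
  ∑ x1 : Fin (trainLen α n) → X, ∑ x2 : Fin (trainLen α n) → X, ∑ y : Fin n → X,
    if ψ x1 x2 y = some 1 then seqProb P1 x1 * seqProb P2 x2 * seqProb P1 y else 0

/-- Type-2 error probability of a rejection test: declare `H₁` under `H₂`. -/
noncomputable def beta2R {α : ℝ} {n : ℕ} (ψ : RTest X α n) (P1 P2 : X → ℝ) : ℝ :=
  ∑ x1 : Fin (trainLen α n) → X, ∑ x2 : Fin (trainLen α n) → X, ∑ y : Fin n → X,
    if ψ x1 x2 y = some 0 then seqProb P1 x1 * seqProb P2 x2 * seqProb P2 y else 0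

open Classical in
/-- Type-`j` rejection probability of a binary rejection test. -/
noncomputable def zetaR {α : ℝ} {n : ℕ} (ψ : RTest X α n) (P1 P2 : X → ℝ) (j : Fin 2) : ℝ :=
  ∑ x1 : Fin (trainLen α n) → X, ∑ x2 : Fin (trainLen α n) → X, ∑ y : Fin n → X,
    if ψ x1 x2 y = none then
      seqProb P1 x1 * seqProb P2 x2 * seqProb (if j = 0 then P1 else P2) y else 0

/-- A binary test is type-based if it depends on the data only through the
triple of empirical distributions. -/
def TypeBasedB {α : ℝ} {n : ℕ} (φ : BTest X α n) : Prop :=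
  ∀ x1 x1' x2 x2' : Fin (trainLen α n) → X, ∀ y y' : Fin n → X,
    empDist x1 = empDist x1' → empDist x2 = empDist x2' → empDist y = empDist y' →
      φ x1 x2 y = φ x1' x2' y'

/-- An M-ary test is type-based if it depends on the data only through the
tuple of empirical distributions. -/
def TypeBasedM {M : ℕ} {α : ℝ} {n : ℕ} (ψ : MTest X M α n) : Prop :=
  ∀ xs xs' : Fin M → Fin (trainLen α n) → X, ∀ y y' : Fin n → X,
    (∀ i, empDist (xs i) = empDist (xs' i)) → empDist y = empDist y' →
      ψ xs y = ψ xs' y'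

open Classical in
/-- Probability of an event under hypothesis `H₂` in the binary setup. -/
noncomputable def prH2E (α : ℝ) (n : ℕ) (P1 P2 : X → ℝ)
    (E : (Fin (trainLen α n) → X) → (Fin (trainLen α n) → X) → (Fin n → X) → Prop) : ℝ :=
  ∑ x1 : Fin (trainLen α n) → X, ∑ x2 : Fin (trainLen α n) → X, ∑ y : Fin n → X,
    if E x1 x2 y then seqProb P1 x1 * seqProb P2 x2 * seqProb P2 y else 0

open Classical in
/-- Probability of an event under hypothesis `H_j` in the M-ary setup. -/
noncomputable def prHjM (M : ℕ) (α : ℝ) (n : ℕ) (P : Fin M → X → ℝ) (j : Fin M)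
    (E : (Fin M → Fin (trainLen α n) → X) → (Fin n → X) → Prop) : ℝ :=
  ∑ xs : Fin M → Fin (trainLen α n) → X, ∑ y : Fin n → X,
    if E xs y then (∏ i, seqProb (P i) (xs i)) * seqProb (P j) y else 0

/-- `η_n(α) = |X| log(n+1)/n + 2|X| log(1+αn)/(αn)`. -/
noncomputable def etaN (X : Type*) [Fintype X] (α : ℝ) (n : ℕ) : ℝ :=
  (Fintype.card X : ℝ) * Real.log ((n : ℝ) + 1) / n +
    2 * (Fintype.card X : ℝ) * Real.log (1 + α * n) / (α * n)

/-- `η_{n,M} = M |X| log(nα+1)/(nα) + |X| log(n+1)/n`. -/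
noncomputable def etaNM (X : Type*) [Fintype X] (M : ℕ) (α : ℝ) (n : ℕ) : ℝ :=
  (M : ℝ) * (Fintype.card X : ℝ) * Real.log ((n : ℝ) * α + 1) / ((n : ℝ) * α) +
    (Fintype.card X : ℝ) * Real.log ((n : ℝ) + 1) / n

/-- `Q` is an `m`-type: the empirical distribution of some sequence of length `m`. -/
def IsTypeDist (m : ℕ) (Q : X → ℝ) : Prop := ∃ x : Fin m → X, empDist x = Q

/-- The type-restricted exponent function `F_n`. -/
noncomputable def Fn (n : ℕ) (P1 P2 : X → ℝ) (α lam : ℝ) : ℝ :=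
  sInf {v : ℝ | ∃ Q1 Q2 : X → ℝ, IsTypeDist (trainLen α n) Q1 ∧ IsTypeDist n Q2 ∧
    GJS Q1 Q2 α ≤ lam ∧ v = α * klDivR Q1 P1 + klDivR Q2 P2}

/-- The second smallest value of a finite family of reals:
`min_{i ≠ j} max (v i) (v j)`. -/
noncomputable def secondMin {M : ℕ} (v : Fin M → ℝ) : ℝ :=
  sInf {t : ℝ | ∃ i j : Fin M, i ≠ j ∧ t = max (v i) (v j)}

/-- The tilted distribution `P^{(γ)}` with `γ = α/(1+α)`. -/
noncomputable def tilt (α : ℝ) (P1 P2 : X → ℝ) : X → ℝ :=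
  fun x => P1 x ^ (α / (1 + α)) * P2 x ^ (1 / (1 + α)) /
    ∑ a, P1 a ^ (α / (1 + α)) * P2 a ^ (1 / (1 + α))


/-! ## Helper material -/

/-- Number of occurrences. -/
noncomputable def cntR {m : ℕ} (x : Fin m → X) (a : X) : ℝ :=
  ∑ i, (if x i = a then (1 : ℝ) else 0)

/-- Strong typicality. -/
def Typ (η : ℝ) (P : X → ℝ) {m : ℕ} (x : Fin m → X) : Prop :=
  ∀ a, |cntR x a - m * P a| ≤ η * (m * P a)

/-- Cross entropy. -/
noncomputable def crossE (R Q : X → ℝ) : ℝ := -∑ a, R a * Real.log (Q a)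

omit [DecidableEq X] in
lemma seqProb_nonneg {P : X → ℝ} (h : IsDist P) {m : ℕ} (x : Fin m → X) : 0 ≤ seqProb P x :=
  Finset.prod_nonneg fun i _ => h.1 _

omit [DecidableEq X] in
lemma IsDist.le_one {P : X → ℝ} (h : IsDist P) (a : X) : P a ≤ 1 := by
  rw [← h.2]
  exact Finset.single_le_sum (fun i _ => h.1 i) (Finset.mem_univ a)

lemma sum_cons (m : ℕ) (F : (Fin (m + 1) → X) → ℝ) :
    ∑ x, F x = ∑ b : X, ∑ x : Fin m → X, F (Fin.cons b x) := by
  rw [← Fintype.sum_prod_type']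
  exact (Equiv.sum_comp (Fin.consEquiv (fun _ : Fin (m + 1) => X)) F).symm

lemma moments {P : X → ℝ} (h : IsDist P) (g : X → ℝ) (hg : ∑ a, P a * g a = 0) (m : ℕ) :
    (∑ x : Fin m → X, seqProb P x = 1) ∧
    (∑ x : Fin m → X, seqProb P x * ∑ i, g (x i) = 0) ∧
    (∑ x : Fin m → X, seqProb P x * (∑ i, g (x i)) ^ 2 = m * ∑ a, P a * g a ^ 2) := by
  induction m with
  | zero => simp [seqProb]
  | succ m ih =>
    obtain ⟨i0, i1, i2⟩ := ih
    have hs : ∀ (b : X) (x : Fin m → X),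
        seqProb P (Fin.cons b x : Fin (m + 1) → X) = P b * seqProb P x := by
      intro b x
      simp [seqProb, Fin.prod_univ_succ]
    have hg' : ∀ (b : X) (x : Fin m → X),
        ∑ i, g ((Fin.cons b x : Fin (m + 1) → X) i) = g b + ∑ i, g (x i) := by
      intro b x
      simp [Fin.sum_univ_succ]
    refine ⟨?_, ?_, ?_⟩
    · rw [sum_cons]
      simp only [hs, ← Finset.mul_sum, i0, mul_one, h.2]
    · rw [sum_cons]
      simp only [hs, hg']
      have : ∀ b : X, ∑ x : Fin m → X, P b * seqProb P x * (g b + ∑ i, g (x i))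
          = P b * g b := by
        intro b
        have e : ∀ x : Fin m → X, P b * seqProb P x * (g b + ∑ i, g (x i))
          = P b * g b * seqProb P x + P b * (seqProb P x * ∑ i, g (x i)) := fun x => by ring
        simp only [e, Finset.sum_add_distrib, ← Finset.mul_sum, i0, i1]
        ring
      simp only [this, hg]
    · rw [sum_cons]
      simp only [hs, hg']
      have : ∀ b : X, ∑ x : Fin m → X, P b * seqProb P x * (g b + ∑ i, g (x i)) ^ 2
          = P b * g b ^ 2 + P b * (m * ∑ a, P a * g a ^ 2) := by
        intro b
        have e : ∀ x : Fin m → X, P b * seqProb P x * (g b + ∑ i, g (x i)) ^ 2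
          = P b * g b ^ 2 * seqProb P x + 2 * P b * g b * (seqProb P x * ∑ i, g (x i))
            + P b * (seqProb P x * (∑ i, g (x i)) ^ 2) := fun x => by ring
        simp only [e, Finset.sum_add_distrib, ← Finset.mul_sum, i0, i1, i2]
        ring
      simp only [this, Finset.sum_add_distrib, ← Finset.sum_mul, h.2]
      push_cast
      ring

lemma sum_seqProb {P : X → ℝ} (h : IsDist P) (m : ℕ) : ∑ x : Fin m → X, seqProb P x = 1 :=
  (moments h (fun _ => 0) (by simp) m).1

lemma cnt_var {P : X → ℝ} (h : IsDist P) (a : X) (m : ℕ) :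
    ∑ x : Fin m → X, seqProb P x * (cntR x a - m * P a) ^ 2 ≤ m * P a := by
  have hg : ∑ b, P b * ((if b = a then (1 : ℝ) else 0) - P a) = 0 := by
    simp [mul_sub, Finset.sum_sub_distrib, ← Finset.sum_mul, h.2]
  have := (moments h _ hg m).2.2
  have e : ∀ x : Fin m → X, ∑ i, ((if x i = a then (1 : ℝ) else 0) - P a)
      = cntR x a - m * P a := by
    intro x
    simp [cntR, Finset.sum_sub_distrib]
  simp only [e] at this
  rw [this]
  have e2 : ∀ b, P b * ((if b = a then (1 : ℝ) else 0) - P a) ^ 2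
      = P b * (if b = a then (1 - 2 * P a) else 0) + P b * P a ^ 2 := by
    intro b
    split_ifs <;> ring
  have : ∑ b, P b * ((if b = a then (1 : ℝ) else 0) - P a) ^ 2 = P a * (1 - P a) := by
    simp only [e2, Finset.sum_add_distrib, ← Finset.sum_mul, h.2]
    simp
    ring
  rw [this]
  have := h.1 a
  have hm : (0 : ℝ) ≤ m := by positivity
  nlinarith [mul_nonneg hm (mul_nonneg this this)]

lemma cntR_eq {m : ℕ} (x : Fin m → X) (a : X) :
    cntR x a = ((Finset.univ.filter fun i => x i = a).card : ℝ) := by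
  simp [cntR]

open Classical in
lemma atyp_a {P : X → ℝ} (h : IsDist P) {η : ℝ} (hη : 0 < η) (a : X) {m : ℕ} (hm : 0 < m) :
    ∑ x : Fin m → X, (if ¬ |cntR x a - m * P a| ≤ η * (m * P a) then seqProb P x else 0)
      ≤ (1 / (η ^ 2 * P a)) / m := by
  have hv := cnt_var h a m
  have hm' : (0 : ℝ) < m := by exact_mod_cast hm
  rcases (h.1 a).eq_or_lt with h0 | h0
  · rw [← h0] at hv ⊢
    simp only [mul_zero, sub_zero, div_zero, zero_div] at hv ⊢
    refine le_trans (Finset.sum_le_sum fun x _ => ?_) hv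
    have hs := seqProb_nonneg h x
    split_ifs with hc
    · positivity
    · have : (1 : ℝ) ≤ cntR x a := by
        rw [cntR_eq] at hc ⊢
        rw [not_le, abs_pos] at hc
        exact_mod_cast Nat.one_le_iff_ne_zero.mpr (by exact_mod_cast hc)
      nlinarith [mul_nonneg hs (by nlinarith : (0 : ℝ) ≤ cntR x a ^ 2 - 1)]
  · have hd : 0 < η * (m * P a) := by positivity
    have : ∑ x : Fin m → X, (if ¬ |cntR x a - m * P a| ≤ η * (m * P a) then seqProb P x else 0)
        ≤ ∑ x : Fin m → X, (seqProb P x * (cntR x a - m * P a) ^ 2) / (η * (m * P a)) ^ 2 := by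
      refine Finset.sum_le_sum fun x _ => ?_
      have hs := seqProb_nonneg h x
      split_ifs with hc
      · positivity
      · rw [le_div_iff₀ (by positivity)]
        refine mul_le_mul_of_nonneg_left ?_ hs
        rw [← sq_abs (cntR x a - m * P a)]
        exact pow_le_pow_left₀ hd.le (not_le.mp hc).le 2
    refine this.trans ?_
    rw [← Finset.sum_div, div_le_iff₀ (by positivity)]
    refine hv.trans (le_of_eq ?_)
    field_simp

open Classical in
lemma atyp {P : X → ℝ} (h : IsDist P) {η : ℝ} (hη : 0 < η) {δ : ℝ} (hδ : 0 < δ) :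
    ∃ m0 : ℕ, ∀ m, m0 ≤ m →
      ∑ x : Fin m → X, (if ¬ Typ η P x then seqProb P x else 0) ≤ δ := by
  set K : ℝ := ∑ a, 1 / (η ^ 2 * P a) with hK
  have ht : Tendsto (fun m : ℕ => K / (m : ℝ)) atTop (𝓝 0) :=
    tendsto_const_div_atTop_nhds_zero_nat K
  obtain ⟨m0, hm0⟩ := eventually_atTop.mp
    ((ht.eventually (eventually_le_nhds hδ)).and (eventually_gt_atTop 0))
  refine ⟨m0, fun m hm => ?_⟩
  obtain ⟨h1, h2⟩ := hm0 m hm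
  refine le_trans ?_ h1
  rw [hK, Finset.sum_div]
  refine le_trans ?_ (Finset.sum_le_sum fun a _ => atyp_a h hη a h2)
  rw [Finset.sum_comm]
  refine Finset.sum_le_sum fun x _ => ?_
  have hs := seqProb_nonneg h x
  split_ifs with hc
  · exact Finset.sum_nonneg fun b _ => by split_ifs <;> simp [hs]
  · obtain ⟨a, ha⟩ := not_forall.mp hc
    refine le_trans ?_ (Finset.single_le_sum (fun b _ => ?_) (Finset.mem_univ a))
    · rw [if_pos ha]
    · split_ifs <;> simp [hs]

lemma seqProb_exp {Q : X → ℝ} {m : ℕ} (x : Fin m → X) (hx : ∀ i, 0 < Q (x i)) :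
    seqProb Q x = Real.exp (∑ a, cntR x a * Real.log (Q a)) := by
  have : ∑ a, cntR x a * Real.log (Q a) = ∑ i, Real.log (Q (x i)) := by
    simp only [cntR, Finset.sum_mul]
    rw [Finset.sum_comm]
    refine Finset.sum_congr rfl fun i _ => ?_
    simp
  rw [this, Real.exp_sum]
  exact Finset.prod_congr rfl fun i _ => (Real.exp_log (hx i)).symm

lemma cntR_pos {m : ℕ} (x : Fin m → X) (i : Fin m) : 1 ≤ cntR x (x i) := by
  rw [cntR_eq]
  have : 0 < (Finset.univ.filter fun j => x j = x i).card :=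
    Finset.card_pos.mpr ⟨i, by simp⟩
  exact_mod_cast this

lemma Typ.pos {η : ℝ} {P : X → ℝ} (h : IsDist P) {m : ℕ} {x : Fin m → X}
    (hx : Typ η P x) (i : Fin m) : 0 < P (x i) := by
  rcases (h.1 (x i)).eq_or_lt with h0 | h0
  · have := hx (x i)
    rw [← h0] at this
    have h2 := cntR_pos x i
    simp at this
    linarith
  · exact h0

lemma Typ.upper {η : ℝ} {P Q : X → ℝ} (hQ : IsDist Q) {m : ℕ} {x : Fin m → X}
    (hx : Typ η P x) (hp : ∀ i, 0 < Q (x i)) :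
    seqProb Q x ≤ Real.exp (-((1 - η) * m * crossE P Q)) := by
  rw [seqProb_exp x hp, Real.exp_le_exp, crossE, mul_neg, neg_neg, Finset.mul_sum]
  refine Finset.sum_le_sum fun a _ => ?_
  have hl : Real.log (Q a) ≤ 0 := Real.log_nonpos (hQ.1 a) (hQ.le_one a)
  have := (abs_le.mp (hx a)).1
  nlinarith

lemma Typ.lower {η : ℝ} {P Q : X → ℝ} (hQ : IsDist Q) {m : ℕ} {x : Fin m → X}
    (hx : Typ η P x) (hp : ∀ i, 0 < Q (x i)) :
    Real.exp (-((1 + η) * m * crossE P Q)) ≤ seqProb Q x := by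
  rw [seqProb_exp x hp, Real.exp_le_exp, crossE, mul_neg, neg_neg, Finset.mul_sum]
  refine Finset.sum_le_sum fun a _ => ?_
  have hl : Real.log (Q a) ≤ 0 := Real.log_nonpos (hQ.1 a) (hQ.le_one a)
  have := (abs_le.mp (hx a)).2
  nlinarith

omit [DecidableEq X] in
lemma crossE_nonneg {P Q : X → ℝ} (hP : IsDist P) (hQ : IsDist Q) : 0 ≤ crossE P Q := by
  rw [crossE, neg_nonneg]
  exact Finset.sum_nonpos fun a _ => mul_nonpos_of_nonneg_of_nonpos (hP.1 a)
    (Real.log_nonpos (hQ.1 a) (hQ.le_one a))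

omit [DecidableEq X] in
lemma gibbs {M Q : X → ℝ} (hM : IsDist M) (hQ : IsDist Q) (hac : ∀ a, 0 < M a → 0 < Q a) :
    crossE M M ≤ crossE M Q := by
  rw [crossE, crossE, neg_le_neg_iff, ← sub_nonpos, ← Finset.sum_sub_distrib]
  have : ∑ a, (Q a - M a) = 0 := by rw [Finset.sum_sub_distrib, hM.2, hQ.2, sub_self]
  rw [← this]
  refine Finset.sum_le_sum fun a _ => ?_
  rcases (hM.1 a).eq_or_lt with h0 | h0
  · rw [← h0]
    simpa using hQ.1 a
  · have hq := hac a h0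
    have := Real.log_le_sub_one_of_pos (div_pos hq h0)
    rw [Real.log_div hq.ne' h0.ne'] at this
    have h2 := mul_le_mul_of_nonneg_left this h0.le
    have h3 : M a * (Q a / M a - 1) = Q a - M a := by field_simp
    linarith

omit [DecidableEq X] in
lemma mix_dist {α : ℝ} (hα : 0 < α) {P1 P2 : X → ℝ} (h1 : IsDist P1) (h2 : IsDist P2) :
    IsDist (mix P1 P2 α) := by
  refine ⟨fun x => ?_, ?_⟩
  · have := h1.1 x
    have := h2.1 x
    unfold mix
    positivity
  · simp only [mix, ← Finset.sum_div, Finset.sum_add_distrib, ← Finset.mul_sum, h1.2, h2.2]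
    field_simp
    ring

omit [DecidableEq X] in
lemma kl_eq {P Q : X → ℝ} (hP : IsDist P) (hac : ∀ a, 0 < P a → 0 < Q a) :
    klDivR P Q = crossE P Q - crossE P P := by
  rw [klDivR, crossE, crossE, neg_sub_neg, ← Finset.sum_sub_distrib]
  refine Finset.sum_congr rfl fun a _ => ?_
  rcases (hP.1 a).eq_or_lt with h0 | h0
  · simp [← h0]
  · rw [Real.log_div h0.ne' (hac a h0).ne']
    ring

omit [DecidableEq X] in
lemma crossE_mix {α : ℝ} (hα : 0 < α) (P1 P2 Q : X → ℝ) :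
    (1 + α) * crossE (mix P1 P2 α) Q = α * crossE P1 Q + crossE P2 Q := by
  simp only [crossE, mul_neg, Finset.mul_sum, ← neg_add, ← Finset.sum_add_distrib]
  congr 1
  refine Finset.sum_congr rfl fun a _ => ?_
  unfold mix
  field_simp

omit [DecidableEq X] in
lemma mix_pos1 {α : ℝ} (hα : 0 < α) {P1 P2 : X → ℝ} (h2 : IsDist P2) (a : X) (h : 0 < P1 a) :
    0 < mix P1 P2 α a := by
  have := h2.1 a
  unfold mix
  positivity

omit [DecidableEq X] in
lemma mix_pos2 {α : ℝ} (hα : 0 < α) {P1 P2 : X → ℝ} (h1 : IsDist P1) (a : X) (h : 0 < P2 a) :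
    0 < mix P1 P2 α a := by
  have := h1.1 a
  unfold mix
  positivity

/-- The slack constant. -/
noncomputable def slackC (P1 P2 : X → ℝ) (α : ℝ) : ℝ :=
  α * crossE P1 (mix P1 P2 α) + crossE P2 (mix P1 P2 α) + α * crossE P1 P1 + crossE P2 P2

/-- The additive constant. -/
noncomputable def addC (P1 P2 : X → ℝ) (α : ℝ) : ℝ :=
  2 * crossE P1 (mix P1 P2 α) + 2 * crossE P1 P1

omit [DecidableEq X] in
lemma GJS_eq {α : ℝ} (hα : 0 < α) {P1 P2 : X → ℝ} (h1 : IsDist P1) (h2 : IsDist P2) :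
    GJS P1 P2 α = α * (crossE P1 (mix P1 P2 α) - crossE P1 P1)
      + (crossE P2 (mix P1 P2 α) - crossE P2 P2) := by
  rw [GJS, kl_eq h1 (fun a => mix_pos1 hα h2 a), kl_eq h2 (fun a => mix_pos2 hα h1 a)]

lemma trainLen_ge (α : ℝ) (n : ℕ) : α * n ≤ trainLen α n := Nat.le_ceil _

lemma trainLen_le {α : ℝ} (hα : 0 < α) (n : ℕ) : (trainLen α n : ℝ) ≤ α * n + 1 :=
  (Nat.ceil_lt_add_one (by positivity)).le

/-- Converse likelihood bound. -/
lemma conv_bound {α : ℝ} (hα : 0 < α) {P1 P2 : X → ℝ} (h1 : IsDist P1) (h2 : IsDist P2)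
    {η : ℝ} (hη : 0 < η) (hη1 : η < 1) {n : ℕ} {x : Fin (trainLen α n) → X} {y : Fin n → X}
    (hx : Typ η P1 x) (hy : Typ η P2 y) :
    seqProb P1 x * seqProb P2 y ≤
      Real.exp (n * (GJS P1 P2 α + η * slackC P1 P2 α) + addC P1 P2 α) *
        (seqProb (mix P1 P2 α) x * seqProb (mix P1 P2 α) y) := by
  have hM := mix_dist hα h1 h2
  have a1 := hx.upper h1 (fun i => hx.pos h1 i)
  have a2 := hy.upper h2 (fun i => hy.pos h2 i)
  have a3 := hx.lower hM (fun i => mix_pos1 hα h2 _ (hx.pos h1 i))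
  have a4 := hy.lower hM (fun i => mix_pos2 hα h1 _ (hy.pos h2 i))
  have b1 := crossE_nonneg h1 h1
  have b3 := crossE_nonneg h1 hM
  refine (mul_le_mul a1 a2 (seqProb_nonneg h2 y) (Real.exp_nonneg _)).trans ?_
  refine le_trans ?_ (mul_le_mul_of_nonneg_left (mul_le_mul a3 a4 (Real.exp_nonneg _)
    (seqProb_nonneg hM x)) (Real.exp_nonneg _))
  rw [← Real.exp_add, ← Real.exp_add, ← Real.exp_add, Real.exp_le_exp, GJS_eq hα h1 h2]
  unfold slackC addC
  have c1 := trainLen_ge α n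
  have c2 := trainLen_le hα n
  have d1 : (1 - η) * (α * n) * crossE P1 P1 ≤ (1 - η) * trainLen α n * crossE P1 P1 := by
    have : 0 ≤ 1 - η := by linarith
    gcongr
  have d2 : (1 + η) * trainLen α n * crossE P1 (mix P1 P2 α)
      ≤ (1 + η) * (α * n + 1) * crossE P1 (mix P1 P2 α) := by
    gcongr
  nlinarith

/-- Achievability likelihood bound. -/
lemma ach_bound {α : ℝ} (hα : 0 < α) {P1 P2 : X → ℝ} (h1 : IsDist P1) (h2 : IsDist P2)
    {η : ℝ} (hη : 0 < η) (hη1 : η < 1) {n : ℕ} (hn : 0 < n)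
    {x : Fin (trainLen α n) → X} {y : Fin n → X}
    (hx : Typ η P1 x) (hy : Typ η P2 y) {Q : X → ℝ} (hQ : IsDist Q) :
    seqProb Q x * seqProb Q y ≤
      Real.exp (-(n * (GJS P1 P2 α - η * slackC P1 P2 α)) + addC P1 P2 α) *
        (seqProb P1 x * seqProb P2 y) := by
  have hr : 0 ≤ Real.exp (-(n * (GJS P1 P2 α - η * slackC P1 P2 α)) + addC P1 P2 α) *
        (seqProb P1 x * seqProb P2 y) :=
    mul_nonneg (Real.exp_nonneg _) (mul_nonneg (seqProb_nonneg h1 x) (seqProb_nonneg h2 y))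
  have hn' : (0 : ℝ) < n := by exact_mod_cast hn
  have c1 := trainLen_ge α n
  have c2 := trainLen_le hα n
  have hN : (0 : ℝ) < trainLen α n := lt_of_lt_of_le (by positivity) c1
  by_cases hqx : ∀ i, 0 < Q (x i)
  swap
  · obtain ⟨i, hi⟩ := not_forall.mp hqx
    have : seqProb Q x = 0 := Finset.prod_eq_zero (Finset.mem_univ i)
      (le_antisymm (not_lt.mp hi) (hQ.1 _))
    rw [this, zero_mul]
    exact hr
  by_cases hqy : ∀ i, 0 < Q (y i)
  swap
  · obtain ⟨i, hi⟩ := not_forall.mp hqy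
    have : seqProb Q y = 0 := Finset.prod_eq_zero (Finset.mem_univ i)
      (le_antisymm (not_lt.mp hi) (hQ.1 _))
    rw [this, mul_zero]
    exact hr
  have key : ∀ {m : ℕ} {z : Fin m → X} {P : X → ℝ}, (0 : ℝ) < m → Typ η P z →
      (∀ i, 0 < Q (z i)) → ∀ a, 0 < P a → 0 < Q a := by
    intro m z P hm hz hq a ha
    have := (abs_le.mp (hz a)).1
    have hp : 0 < m * P a := by positivity
    have hc : cntR z a ≠ 0 := by nlinarith
    rw [cntR_eq] at hc
    have hc' : (Finset.univ.filter fun i => z i = a).card ≠ 0 := by exact_mod_cast hc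
    obtain ⟨i, hi⟩ := Finset.card_ne_zero.mp hc'
    rw [← (Finset.mem_filter.mp hi).2]
    exact hq i
  have hM := mix_dist hα h1 h2
  have hac : ∀ a, 0 < mix P1 P2 α a → 0 < Q a := by
    intro a ha
    by_contra hcon
    have p1 : P1 a = 0 := le_antisymm (not_lt.mp fun h => hcon (key hN hx hqx a h)) (h1.1 a)
    have p2 : P2 a = 0 := le_antisymm (not_lt.mp fun h => hcon (key hn' hy hqy a h)) (h2.1 a)
    simp [mix, p1, p2] at ha
  have hg := gibbs hM hQ hac
  have e1 := crossE_mix hα P1 P2 Q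
  have e2 := crossE_mix hα P1 P2 (mix P1 P2 α)
  have a1 := hx.lower h1 (fun i => hx.pos h1 i)
  have a2 := hy.lower h2 (fun i => hy.pos h2 i)
  have a3 := hx.upper hQ hqx
  have a4 := hy.upper hQ hqy
  have b1 := crossE_nonneg h1 h1
  have b2 := crossE_nonneg h1 hM
  have b3 := crossE_nonneg h1 hQ
  refine (mul_le_mul a3 a4 (seqProb_nonneg hQ y) (Real.exp_nonneg _)).trans ?_
  refine le_trans ?_ (mul_le_mul_of_nonneg_left (mul_le_mul a1 a2 (Real.exp_nonneg _)
    (seqProb_nonneg h1 x)) (Real.exp_nonneg _))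
  rw [← Real.exp_add, ← Real.exp_add, ← Real.exp_add, Real.exp_le_exp, GJS_eq hα h1 h2]
  unfold slackC addC
  have h1η : 0 ≤ 1 - η := by linarith
  have d1 : (1 + η) * trainLen α n * crossE P1 P1 ≤ (1 + η) * (α * n + 1) * crossE P1 P1 := by
    gcongr
  have d2 : (1 - η) * (α * n) * crossE P1 Q ≤ (1 - η) * trainLen α n * crossE P1 Q := by
    gcongr
  have d3 : α * crossE P1 (mix P1 P2 α) + crossE P2 (mix P1 P2 α)
      ≤ α * crossE P1 Q + crossE P2 Q := by
    rw [← e1, ← e2]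
    gcongr
  have d4 := mul_le_mul_of_nonneg_left d3 (mul_nonneg h1η hn'.le)
  nlinarith

lemma triple_sum {A B C : Type*} [Fintype A] [Fintype B] [Fintype C]
    (f : A → ℝ) (g : B → ℝ) (k : C → ℝ) :
    ∑ a, ∑ b, ∑ c, f a * g b * k c = (∑ a, f a) * (∑ b, g b) * (∑ c, k c) := by
  simp only [← Finset.mul_sum, ← Finset.sum_mul]

lemma conv_ineq {α : ℝ} (hα : 0 < α) {P1 P2 : X → ℝ} (h1 : IsDist P1) (h2 : IsDist P2)
    {η : ℝ} (hη : 0 < η) (hη1 : η < 1) {n : ℕ} (φ : BTest X α n) {δ : ℝ}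
    (hb1 : ∑ x : Fin (trainLen α n) → X, (open Classical in if ¬ Typ η P1 x then seqProb P1 x else 0) ≤ δ)
    (hb2 : ∑ x : Fin n → X, (open Classical in if ¬ Typ η P2 x then seqProb P2 x else 0) ≤ δ) :
    1 ≤ beta2 φ P1 P2 +
      Real.exp (n * (GJS P1 P2 α + η * slackC P1 P2 α) + addC P1 P2 α) *
        beta1 φ (mix P1 P2 α) P2 + δ + δ := by
  classical
  set K := Real.exp (n * (GJS P1 P2 α + η * slackC P1 P2 α) + addC P1 P2 α) with hK
  have hK0 : 0 ≤ K := Real.exp_nonneg _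
  have hM := mix_dist hα h1 h2
  have t := triple_sum (fun x : Fin (trainLen α n) → X => seqProb P1 x)
    (fun x : Fin (trainLen α n) → X => seqProb P2 x) (fun y : Fin n → X => seqProb P2 y)
  have t1 := triple_sum (fun x : Fin (trainLen α n) → X => if ¬ Typ η P1 x then seqProb P1 x else 0)
    (fun x : Fin (trainLen α n) → X => seqProb P2 x) (fun y : Fin n → X => seqProb P2 y)
  have t2 := triple_sum (fun x : Fin (trainLen α n) → X => seqProb P1 x)
    (fun x : Fin (trainLen α n) → X => seqProb P2 x)
    (fun y : Fin n → X => if ¬ Typ η P2 y then seqProb P2 y else 0)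
  simp only [sum_seqProb h1, sum_seqProb h2, mul_one, one_mul] at t t1 t2
  refine le_trans ?_ (add_le_add (add_le_add le_rfl hb1) hb2)
  rw [← t1, ← t2]
  refine t.symm.le.trans ?_
  unfold beta1 beta2
  simp only [Finset.mul_sum, ← Finset.sum_add_distrib]
  refine Finset.sum_le_sum fun x1 _ => Finset.sum_le_sum fun x2 _ => Finset.sum_le_sum fun y _ => ?_
  have s1 := seqProb_nonneg h1 x1
  have s2 := seqProb_nonneg h2 x2
  have s3 := seqProb_nonneg h2 y
  have s4 := seqProb_nonneg hM x1
  have s5 := seqProb_nonneg hM y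
  have w : 0 ≤ seqProb P1 x1 * seqProb P2 x2 * seqProb P2 y := by positivity
  have w' : 0 ≤ K * (seqProb (mix P1 P2 α) x1 * seqProb P2 x2 * seqProb (mix P1 P2 α) y) := by
    positivity
  have i1 : 0 ≤ (if φ x1 x2 y = false then seqProb P1 x1 * seqProb P2 x2 * seqProb P2 y else 0) := by
    split_ifs
    · exact w
    · exact le_rfl
  have i2 : 0 ≤ K * (if φ x1 x2 y = true then
      seqProb (mix P1 P2 α) x1 * seqProb P2 x2 * seqProb (mix P1 P2 α) y else 0) := by
    split_ifs
    · exact w'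
    · rw [mul_zero]
  have i3 : 0 ≤ (if ¬ Typ η P1 x1 then seqProb P1 x1 else 0) * seqProb P2 x2 * seqProb P2 y := by
    split_ifs
    · simp
    · exact w
  have i4 : 0 ≤ seqProb P1 x1 * seqProb P2 x2 * (if ¬ Typ η P2 y then seqProb P2 y else 0) := by
    split_ifs
    · simp
    · exact w
  by_cases hT1 : Typ η P1 x1
  swap
  · rw [if_pos hT1] at i3 ⊢
    linarith
  by_cases hT2 : Typ η P2 y
  swap
  · rw [if_pos hT2] at i4 ⊢
    linarith
  by_cases hφ : φ x1 x2 y = true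
  swap
  · rw [Bool.not_eq_true] at hφ
    rw [if_pos hφ] at i1 ⊢
    linarith
  · rw [if_pos hφ] at i2 ⊢
    have := mul_le_mul_of_nonneg_left (conv_bound hα h1 h2 hη hη1 hT1 hT2) s2
    rw [← hK] at this
    linarith

open Classical in
/-- The achieving test. -/
noncomputable def typTest (η : ℝ) (P1 P2 : X → ℝ) (α : ℝ) (n : ℕ) : BTest X α n :=
  fun x1 _ y => if Typ η P1 x1 ∧ Typ η P2 y then true else false

lemma ach_beta1 {α : ℝ} (hα : 0 < α) {P1 P2 : X → ℝ} (h1 : IsDist P1) (h2 : IsDist P2)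
    {η : ℝ} (hη : 0 < η) (hη1 : η < 1) {n : ℕ} (hn : 0 < n) {Q1 Q2 : X → ℝ}
    (hQ1 : IsDist Q1) (hQ2 : IsDist Q2) :
    beta1 (typTest η P1 P2 α n) Q1 Q2 ≤
      Real.exp (-(n * (GJS P1 P2 α - η * slackC P1 P2 α)) + addC P1 P2 α) := by
  classical
  set K := Real.exp (-(n * (GJS P1 P2 α - η * slackC P1 P2 α)) + addC P1 P2 α) with hK
  have hK0 : 0 ≤ K := Real.exp_nonneg _
  have t := triple_sum (fun x : Fin (trainLen α n) → X => K * seqProb P1 x)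
    (fun x : Fin (trainLen α n) → X => seqProb Q2 x) (fun y : Fin n → X => seqProb P2 y)
  rw [← Finset.mul_sum, sum_seqProb h1, sum_seqProb h2, sum_seqProb hQ2, mul_one, mul_one,
    mul_one] at t
  refine le_trans ?_ t.le
  unfold beta1
  refine Finset.sum_le_sum fun x1 _ => Finset.sum_le_sum fun x2 _ => Finset.sum_le_sum fun y _ => ?_
  have s1 := seqProb_nonneg h1 x1
  have s2 := seqProb_nonneg hQ2 x2
  have s3 := seqProb_nonneg h2 y
  split_ifs with hφ
  · have hT : Typ η P1 x1 ∧ Typ η P2 y := by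
      by_contra hc
      simp [typTest, hc] at hφ
    have := mul_le_mul_of_nonneg_left (ach_bound hα h1 h2 hη hη1 hn hT.1 hT.2 hQ1) s2
    nlinarith
  · positivity

lemma ach_beta2 {α : ℝ} {P1 P2 : X → ℝ} (h1 : IsDist P1) (h2 : IsDist P2)
    {η : ℝ} {n : ℕ} {δ : ℝ}
    (hb1 : ∑ x : Fin (trainLen α n) → X, (open Classical in if ¬ Typ η P1 x then seqProb P1 x else 0) ≤ δ)
    (hb2 : ∑ x : Fin n → X, (open Classical in if ¬ Typ η P2 x then seqProb P2 x else 0) ≤ δ) :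
    beta2 (typTest η P1 P2 α n) P1 P2 ≤ δ + δ := by
  classical
  have t1 := triple_sum (fun x : Fin (trainLen α n) → X => if ¬ Typ η P1 x then seqProb P1 x else 0)
    (fun x : Fin (trainLen α n) → X => seqProb P2 x) (fun y : Fin n → X => seqProb P2 y)
  have t2 := triple_sum (fun x : Fin (trainLen α n) → X => seqProb P1 x)
    (fun x : Fin (trainLen α n) → X => seqProb P2 x)
    (fun y : Fin n → X => if ¬ Typ η P2 y then seqProb P2 y else 0)
  simp only [sum_seqProb h1, sum_seqProb h2, mul_one, one_mul] at t1 t2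
  refine le_trans ?_ (add_le_add hb1 hb2)
  rw [← t1, ← t2]
  unfold beta2
  simp only [← Finset.sum_add_distrib]
  refine Finset.sum_le_sum fun x1 _ => Finset.sum_le_sum fun x2 _ => Finset.sum_le_sum fun y _ => ?_
  have s1 := seqProb_nonneg h1 x1
  have s2 := seqProb_nonneg h2 x2
  have s3 := seqProb_nonneg h2 y
  have w : 0 ≤ seqProb P1 x1 * seqProb P2 x2 * seqProb P2 y := by positivity
  unfold typTest
  by_cases hT1 : Typ η P1 x1 <;> by_cases hT2 : Typ η P2 y <;> simp [hT1, hT2, w]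

lemma tendsto_trainLen {α : ℝ} (hα : 0 < α) : Tendsto (fun n => trainLen α n) atTop atTop := by
  apply tendsto_nat_ceil_atTop.comp
  exact (tendsto_natCast_atTop_atTop (R := ℝ)).const_mul_atTop hα

lemma beta1_le_one {α : ℝ} {n : ℕ} (φ : BTest X α n) {Q1 Q2 : X → ℝ}
    (h1 : IsDist Q1) (h2 : IsDist Q2) : beta1 φ Q1 Q2 ≤ 1 := by
  have t := triple_sum (fun x : Fin (trainLen α n) → X => seqProb Q1 x)
    (fun x : Fin (trainLen α n) → X => seqProb Q2 x) (fun y : Fin n → X => seqProb Q1 y)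
  simp only [sum_seqProb h1, sum_seqProb h2, mul_one] at t
  rw [← t]
  unfold beta1
  refine Finset.sum_le_sum fun x1 _ => Finset.sum_le_sum fun x2 _ => Finset.sum_le_sum fun y _ => ?_
  have s1 := seqProb_nonneg h1 x1
  have s2 := seqProb_nonneg h2 x2
  have s3 := seqProb_nonneg h1 y
  split_ifs
  · exact le_rfl
  · positivity

/-- strong converse: for any `ε ∈ (0,1)`,
`λ*(n,α,ε|P1,P2) → GJS(P1,P2,α)` as `n → ∞`. -/
theorem lamStar_strong_converse {X : Type*} [Fintype X] [DecidableEq X]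
    (α ε : ℝ) (hα : 0 < α) (hε : ε ∈ Set.Ioo (0 : ℝ) 1)
    (P1 P2 : X → ℝ) (h1 : IsDist P1) (h2 : IsDist P2)
    (hV : 0 < disp P1 P2 α) :
    Filter.Tendsto (fun n : ℕ => lamStar α n ε P1 P2) Filter.atTop
      (nhds (GJS P1 P2 α)) := by
  obtain ⟨hε0, hε1⟩ := hε
  rw [Metric.tendsto_atTop']
  intro d hd
  have hM := mix_dist hα h1 h2
  set C := slackC P1 P2 α with hC
  have hC0 : 0 ≤ C := by
    have a1 := crossE_nonneg h1 hM
    have a2 := crossE_nonneg h2 hM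
    have a3 := crossE_nonneg h1 h1
    have a4 := crossE_nonneg h2 h2
    rw [hC]
    unfold slackC
    positivity
  obtain ⟨η, hη, hη1, hηC⟩ : ∃ η : ℝ, 0 < η ∧ η < 1 ∧ η * C ≤ d / 4 := by
    refine ⟨min (1 / 2) (d / 4 / (C + 1)), by positivity, ?_, ?_⟩
    · exact lt_of_le_of_lt (min_le_left _ _) (by norm_num)
    · calc min (1 / 2) (d / 4 / (C + 1)) * C ≤ d / 4 / (C + 1) * (C + 1) := by
            gcongr
            · exact min_le_right _ _
            · linarith
        _ = d / 4 := by field_simp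
  obtain ⟨δ, hδ, hδε, hδ1⟩ : ∃ δ : ℝ, 0 < δ ∧ δ + δ ≤ ε ∧ δ + δ ≤ (1 - ε) / 2 := by
    refine ⟨min (ε / 2) ((1 - ε) / 4), ?_, ?_, ?_⟩
    · have : 0 < (1 - ε) / 4 := by linarith
      positivity
    · linarith [min_le_left (ε / 2) ((1 - ε) / 4)]
    · linarith [min_le_right (ε / 2) ((1 - ε) / 4)]
  obtain ⟨m1, hm1⟩ := atyp h1 hη hδ
  obtain ⟨m2, hm2⟩ := atyp h2 hη hδ
  have hlim : ∀ c : ℝ, ∀ᶠ n : ℕ in atTop, c / (n : ℝ) ≤ d / 4 := fun c =>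
    (tendsto_const_div_atTop_nhds_zero_nat c).eventually (eventually_le_nhds (by positivity))
  have hev : ∀ᶠ n : ℕ in atTop, dist (lamStar α n ε P1 P2) (GJS P1 P2 α) < d := by
    filter_upwards [hlim (addC P1 P2 α - Real.log ((1 - ε) / 2)), hlim (addC P1 P2 α),
      eventually_ge_atTop m2, eventually_gt_atTop 0,
      (tendsto_trainLen hα).eventually (eventually_ge_atTop m1)] with n hn1 hn2 hn3 hn4 hn5
    have hn' : (0 : ℝ) < n := by exact_mod_cast hn4
    rw [div_le_iff₀ hn'] at hn1 hn2
    have hb1 := hm1 _ hn5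
    have hb2 := hm2 _ hn3
    set S := {lam : ℝ | 0 ≤ lam ∧ ∃ φ : BTest X α n,
      (∀ Q1 Q2 : X → ℝ, IsDist Q1 → IsDist Q2 →
        beta1 φ Q1 Q2 ≤ Real.exp (-((n : ℝ) * lam))) ∧ beta2 φ P1 P2 ≤ ε} with hS
    have hub : ∀ lam ∈ S, lam ≤ GJS P1 P2 α + d / 2 := by
      rintro lam ⟨_, φ, hφ1, hφ2⟩
      have hc := conv_ineq hα h1 h2 hη hη1 φ hb1 hb2
      have hφ := hφ1 _ _ hM h2
      have := mul_le_mul_of_nonneg_left hφ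
        (Real.exp_nonneg (n * (GJS P1 P2 α + η * slackC P1 P2 α) + addC P1 P2 α))
      rw [← Real.exp_add] at this
      have h3 : (1 - ε) / 2 ≤ Real.exp (n * (GJS P1 P2 α + η * slackC P1 P2 α) + addC P1 P2 α
          + -(n * lam)) := by linarith
      have h4 := (Real.log_le_iff_le_exp (by linarith)).mpr h3
      rw [← hC] at h4
      have h5 := mul_le_mul_of_nonneg_left hηC hn'.le
      by_contra hcon
      have h6 := mul_lt_mul_of_pos_left (not_le.mp hcon) hn'
      nlinarith
    have h0 : (0 : ℝ) ∈ S := by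
      refine ⟨le_rfl, fun _ _ _ => true, fun Q1 Q2 hQ1 hQ2 => ?_, ?_⟩
      · simpa using beta1_le_one _ hQ1 hQ2
      · simp [beta2, hε0.le]
    have hbdd : BddAbove S := ⟨_, hub⟩
    have hup : lamStar α n ε P1 P2 ≤ GJS P1 P2 α + d / 2 := csSup_le ⟨0, h0⟩ hub
    have hlow : GJS P1 P2 α - d / 2 ≤ lamStar α n ε P1 P2 := by
      by_cases hneg : GJS P1 P2 α - d / 2 < 0
      · exact hneg.le.trans (le_csSup hbdd h0)
      · refine le_csSup hbdd ⟨not_lt.mp hneg, typTest η P1 P2 α n, fun Q1 Q2 hQ1 hQ2 => ?_, ?_⟩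
        · refine (ach_beta1 hα h1 h2 hη hη1 hn4 hQ1 hQ2).trans ?_
          rw [Real.exp_le_exp, ← hC]
          have h5 := mul_le_mul_of_nonneg_left hηC hn'.le
          nlinarith
        · exact (ach_beta2 h1 h2 hb1 hb2).trans hδε
    rw [Real.dist_eq, abs_lt]
    constructor <;> linarith
  obtain ⟨N, hN⟩ := eventually_atTop.mp hev
  exact ⟨N, fun n hn => hN n hn.le⟩

end Classification
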